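/- There exists a T-tour of G of cost at most (8/5)·c(x*) + (1/5)·c(I_p) − (2/5)·c(L_p) − (2/5)·Σ_{C∈𝒩} (2 − x*(C))²·c(v^C). -/

import Mathlib

open Finset
open scoped Classical symmDiff

/-- A multigraph on vertex type `V` with edge type `E`, given by the two endpoints
of each edge. -/
structure MultiGraph (V E : Type*) where
  fst : E → V
  snd : E → V

namespace MultiGraph

variable {V E : Type*} [Fintype V] [DecidableEq V] [Fintype E] [DecidableEq E]
variable (G : MultiGraph V E)

/-- The cut `δ(U)`: the set of edges with exactly one endpoint in `U`. -/
noncomputable def cut (U : Finset V) : Finset E :=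
  univ.filter fun e => (G.fst e ∈ U ∧ G.snd e ∉ U) ∨ (G.fst e ∉ U ∧ G.snd e ∈ U)

/-- The degree of `v` with respect to the edge multiset `F`. -/
def deg (F : Multiset E) (v : V) : ℕ :=
  (F.map fun e => (if G.fst e = v then 1 else 0) + (if G.snd e = v then 1 else 0)).sum

/-- `odd(F)`: the set of vertices of odd degree in `(V, F)`. -/
noncomputable def oddVerts (F : Multiset E) : Finset V :=
  univ.filter fun v => Odd (G.deg F v)

/-- Adjacency via an edge satisfying the predicate `P`. -/
def Adj (P : E → Prop) (a b : V) : Prop :=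
  ∃ e, P e ∧ ((G.fst e = a ∧ G.snd e = b) ∨ (G.fst e = b ∧ G.snd e = a))

/-- `(V, {e | P e})` is a connected (spanning) subgraph. -/
def ConnectedOn (P : E → Prop) : Prop :=
  ∀ u w : V, Relation.ReflTransGen (G.Adj P) u w

/-- The graph `G` is connected. -/
def Connected : Prop := G.ConnectedOn fun _ => True

/-- A `T`-tour: a multi-subset `F` of the edges such that `(V, F)` is connected and
`odd(F) = T`. -/
def IsTTour (T : Finset V) (F : Multiset E) : Prop :=
  G.ConnectedOn (· ∈ F) ∧ G.oddVerts F = T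

/-- `S` is the edge set of a spanning tree of `G`. -/
def IsSpanningTree (S : Finset E) : Prop :=
  G.ConnectedOn (· ∈ S) ∧ S.card + 1 = Fintype.card V

/-- `δ(𝒲)`: the set of edges whose endpoints lie in different parts of the
partition `𝒲` of `V`. -/
noncomputable def partitionCut (W : Finpartition (univ : Finset V)) : Finset E :=
  univ.filter fun e => ∀ P ∈ W.parts, ¬(G.fst e ∈ P ∧ G.snd e ∈ P)

/-- Feasibility for the standard LP relaxation of the `T`-tour problem. -/
def LPFeasible (T : Finset V) (x : E → ℝ) : Prop :=
  (∀ e, 0 ≤ x e) ∧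
  (∀ U : Finset V, U.Nonempty → U ≠ univ → Even ((T ∩ U).card) →
    2 ≤ ∑ e ∈ G.cut U, x e) ∧
  (∀ W : Finpartition (univ : Finset V),
    (W.parts.card : ℝ) - 1 ≤ ∑ e ∈ G.partitionCut W, x e)

/-- `C` is a cut of `G`, i.e. `C = δ(U)` for some nonempty proper `U ⊆ V`. -/
def IsCut (C : Finset E) : Prop :=
  ∃ U : Finset V, U.Nonempty ∧ U ≠ univ ∧ C = G.cut U

/-- A narrow cut: a cut `C` with `x(C) < 2`. -/
def Narrow (x : E → ℝ) (C : Finset E) : Prop :=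
  G.IsCut C ∧ ∑ e ∈ C, x e < 2

/-- `𝒩`: the set of narrow cuts. -/
noncomputable def narrowCuts (x : E → ℝ) : Finset (Finset E) :=
  univ.filter fun C => G.Narrow x C

/-- A narrow cut `C` is lonely for `S` if `|S ∩ C| = 1`. -/
def Lonely (x : E → ℝ) (S C : Finset E) : Prop :=
  G.Narrow x C ∧ (S ∩ C).card = 1

/-- `ℒ_S`: the set of lonely cuts of `S`. -/
noncomputable def lonelyCuts (x : E → ℝ) (S : Finset E) : Finset (Finset E) :=
  univ.filter fun C => G.Lonely x S C

/-- `L_S = ∪_{C ∈ ℒ_S} (S ∩ C)`: the set of lonely edges of `S`. -/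
noncomputable def lonelyEdges (x : E → ℝ) (S : Finset E) : Finset E :=
  S.filter fun e => ∃ C, G.Lonely x S C ∧ e ∈ C

/-- The incidence vector `χ^F` of an edge set `F`. -/
def chi (F : Finset E) : E → ℝ := fun e => if e ∈ F then 1 else 0

/-- The vector `v^C = (1/(2 - x(C))) · Σ_{S : C ∈ ℒ_S} p_S · χ^{S ∩ C}`. -/
noncomputable def vC (x : E → ℝ) (p : Finset E → ℝ) (C : Finset E) : E → ℝ :=
  fun e => (1 / (2 - ∑ f ∈ C, x f)) *
    ∑ S : Finset E, (if G.Lonely x S C then p S else 0) * chi (S ∩ C) e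

/-- The modified cost
`c^S(e) = c(e) + 2·(Σ_{C ∈ ℒ_S : e ∈ C} c(S ∩ C) − max_{C ∈ ℒ_S : e ∈ C} c(S ∩ C))`,
where the maximum over the empty set is `0`. -/
noncomputable def modCost (c x : E → ℝ) (S : Finset E) (e : E) : ℝ :=
  c e + 2 * ((∑ C ∈ (G.lonelyCuts x S).filter (fun C => e ∈ C), ∑ f ∈ S ∩ C, c f)
    - (if h : ((G.lonelyCuts x S).filter (fun C => e ∈ C)).Nonempty
        then ((G.lonelyCuts x S).filter (fun C => e ∈ C)).sup' h (fun C => ∑ f ∈ S ∩ C, c f)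
        else 0))

/-- The set of vertices reachable from `v` using edges satisfying `P`. -/
noncomputable def reachSet (P : E → Prop) (v : V) : Finset V :=
  univ.filter fun w => Relation.ReflTransGen (G.Adj P) v w

end MultiGraph
namespace MultiGraph
variable {V E : Type*} [Fintype V] [DecidableEq V] [Fintype E] [DecidableEq E]

/-- Incidence of an edge at a vertex modulo 2. -/
noncomputable def inc (G : MultiGraph V E) (e : E) (v : V) : ZMod 2 :=
  (if G.fst e = v then 1 else 0) + (if G.snd e = v then 1 else 0)

/-- Boundary modulo 2 of an edge set. -/
noncomputable def bd (G : MultiGraph V E) (F : Finset E) (v : V) : ZMod 2 := ∑ e ∈ F, G.inc e v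

/-- Weight of an edge set. -/
def wt (w : E → ℝ) (F : Finset E) : ℝ := ∑ e ∈ F, w e

/-- Indicator of a vertex set modulo 2. -/
def ind (U : Finset V) (v : V) : ZMod 2 := if v ∈ U then 1 else 0

lemma z2 (a : ZMod 2) : a = 0 ∨ a = 1 := by
  revert a; decide

lemma z2_add_self (a : ZMod 2) : a + a = 0 := by
  revert a; decide

lemma bd_symmDiff (G : MultiGraph V E) (F H : Finset E) (v : V) :
    G.bd (F ∆ H) v = G.bd F v + G.bd H v := by
  unfold bd
  have h1 : ∀ K : Finset E, ∑ e ∈ K, G.inc e v = ∑ e, if e ∈ K then G.inc e v else 0 := by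
    intro K; simp
  rw [h1, h1 F, h1 H, ← Finset.sum_add_distrib]
  refine Finset.sum_congr rfl fun e _ => ?_
  have := z2_add_self (G.inc e v)
  by_cases a : e ∈ F <;> by_cases b : e ∈ H <;> simp [Finset.mem_symmDiff, a, b, this]

lemma sum_inc (G : MultiGraph V E) (e : E) (U : Finset V) :
    ∑ v ∈ U, G.inc e v = if e ∈ G.cut U then 1 else 0 := by
  unfold inc cut
  rw [Finset.sum_add_distrib]
  have : (1 + 1 : ZMod 2) = 0 := by decide
  by_cases a : G.fst e ∈ U <;> by_cases b : G.snd e ∈ U <;> simp [a, b, this]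

lemma mem_cut_ind (G : MultiGraph V E) (e : E) (U : Finset V) :
    ind U (G.fst e) + ind U (G.snd e) = if e ∈ G.cut U then 1 else 0 := by
  unfold ind cut
  have : (1 + 1 : ZMod 2) = 0 := by decide
  by_cases a : G.fst e ∈ U <;> by_cases b : G.snd e ∈ U <;> simp [a, b, this]

lemma sum_bd (G : MultiGraph V E) (F : Finset E) (U : Finset V) :
    ∑ v ∈ U, G.bd F v = ((F ∩ G.cut U).card : ZMod 2) := by
  unfold bd
  rw [Finset.sum_comm]
  simp only [sum_inc]
  rw [← Finset.sum_filter, Finset.filter_mem_eq_inter]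
  simp

lemma sum_bd_univ (G : MultiGraph V E) (F : Finset E) :
    ∑ v, G.bd F v = 0 := by
  rw [sum_bd]
  simp [cut]

lemma bd_single (G : MultiGraph V E) (e : E) (v : V) :
    G.bd {e} v = ind {G.fst e} v + ind {G.snd e} v := by
  simp [bd, inc, ind, eq_comm]

lemma path_join (G : MultiGraph V E) (P : E → Prop) (u v : V)
    (h : Relation.ReflTransGen (G.Adj P) u v) :
    ∃ F : Finset E, (∀ e ∈ F, P e) ∧ ∀ z, G.bd F z = ind {u} z + ind {v} z := by
  induction h with
  | refl => exact ⟨∅, by simp, fun z => by rw [z2_add_self]; simp [bd]⟩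
  | @tail b c _ hbc ih =>
    obtain ⟨F, hF, hbd⟩ := ih
    obtain ⟨e, he, hh⟩ := hbc
    refine ⟨F ∆ {e}, ?_, ?_⟩
    · intro f hf
      rw [Finset.mem_symmDiff] at hf
      rcases hf with hf | hf
      · exact hF f hf.1
      · have := hf.1
        rw [Finset.mem_singleton] at this
        rw [this]; exact he
    · intro z
      rw [bd_symmDiff, hbd, bd_single]
      have := z2_add_self (ind {b} z)
      rcases hh with ⟨h1, h2⟩ | ⟨h1, h2⟩ <;> rw [h1, h2] <;> linear_combination this

lemma mem_reachSet (G : MultiGraph V E) (P : E → Prop) (u v : V) :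
    v ∈ G.reachSet P u ↔ Relation.ReflTransGen (G.Adj P) u v := by
  simp [reachSet]

lemma reach_closed (G : MultiGraph V E) (P : E → Prop) (u : V) (e : E) (he : P e) :
    G.fst e ∈ G.reachSet P u ↔ G.snd e ∈ G.reachSet P u := by
  rw [mem_reachSet, mem_reachSet]
  exact ⟨fun h => h.tail ⟨e, he, Or.inl ⟨rfl, rfl⟩⟩, fun h => h.tail ⟨e, he, Or.inr ⟨rfl, rfl⟩⟩⟩

lemma mem_cut (G : MultiGraph V E) (U : Finset V) (e : E) :
    e ∈ G.cut U ↔ ¬ (G.fst e ∈ U ↔ G.snd e ∈ U) := by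
  simp only [cut, Finset.mem_filter, Finset.mem_univ, true_and]; tauto

lemma wt_eq (w : E → ℝ) (F : Finset E) : wt w F = ∑ e, if e ∈ F then w e else 0 := by
  simp [wt]

lemma wt_swap (w : E → ℝ) (J K Q : Finset E)
    (hQ : ∀ e ∈ Q, w e = 0 ∨ e ∈ J ∆ K) :
    wt w (J ∆ Q) + wt w (K ∆ Q) = wt w J + wt w K := by
  simp only [wt_eq, ← Finset.sum_add_distrib]
  refine Finset.sum_congr rfl fun e _ => ?_
  have := hQ e
  by_cases a : e ∈ J <;> by_cases b : e ∈ K <;> by_cases d : e ∈ Q <;>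
    simp_all [Finset.mem_symmDiff]

lemma wt_zero (w : E → ℝ) (K Q : Finset E) (hQ : ∀ e ∈ Q, w e = 0) :
    wt w (K ∆ Q) = wt w K := by
  simp only [wt_eq]
  refine Finset.sum_congr rfl fun e _ => ?_
  have := hQ e
  by_cases b : e ∈ K <;> by_cases d : e ∈ Q <;>
    simp_all [Finset.mem_symmDiff]

lemma wt_nonneg (w : E → ℝ) (hw : ∀ e, 0 ≤ w e) (F : Finset E) : 0 ≤ wt w F :=
  Finset.sum_nonneg fun e _ => hw e

lemma wt_erase (w : E → ℝ) (K : Finset E) (e : E) (he : e ∈ K) :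
    wt w (K ∆ {e}) = wt w K - w e := by
  have : K ∆ {e} = K.erase e := by
    ext f
    by_cases h : f = e
    · subst h; simp [Finset.mem_symmDiff, he]
    · simp [Finset.mem_symmDiff, h]
  rw [this, wt, wt, Finset.sum_erase_eq_sub he]

/-- Local step: a good `T`-odd cut. -/
lemma good_cut (G : MultiGraph V E) (w : E → ℝ) (hw : ∀ e, 0 ≤ w e) (t : V → ZMod 2)
    (J0 : Finset E) (hJ0 : ∀ v, G.bd J0 v = t v)
    (hmin : ∀ J, (∀ v, G.bd J v = t v) → wt w J0 ≤ wt w J) (hpos : 0 < wt w J0) :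
    ∃ U : Finset V, ∑ v ∈ U, t v = 1 ∧ (∀ e ∈ G.cut U, 0 < w e) ∧
      ∀ J, (∀ v, G.bd J v = t v) → wt w J ≤ wt w J0 → (J ∩ G.cut U).card = 1 := by
  let 𝒦 : Finset (V × V × Finset E) := univ.filter fun q =>
    ∀ v, G.bd q.2.2 v = t v + (ind {q.1} v + ind {q.2.1} v)
  obtain ⟨e0, he0, hwe0⟩ : ∃ e ∈ J0, 0 < w e := by
    by_contra hcon
    push Not at hcon
    exact absurd hpos (not_lt.mpr (Finset.sum_nonpos hcon))
  have h0 : (G.fst e0, G.snd e0, J0 ∆ {e0}) ∈ 𝒦 := by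
    simp only [𝒦, Finset.mem_filter, Finset.mem_univ, true_and]
    intro v
    rw [bd_symmDiff, bd_single, hJ0]
  obtain ⟨⟨a, b, K⟩, hK, hKmin⟩ := Finset.exists_min_image 𝒦 (fun q => wt w q.2.2) ⟨_, h0⟩
  have hKlt : wt w K < wt w J0 := by
    have := hKmin _ h0
    simp only at this
    rw [wt_erase w J0 e0 he0] at this
    linarith
  have hKmin' : ∀ a' b' K', (∀ v, G.bd K' v = t v + (ind {a'} v + ind {b'} v)) →
      wt w K ≤ wt w K' := by
    intro a' b' K' h
    exact hKmin (a', b', K') (by simpa [𝒦] using h)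
  simp only [𝒦, Finset.mem_filter, Finset.mem_univ, true_and] at hK
  set A := G.reachSet (fun e => w e = 0) a with hA
  have haA : a ∈ A := by rw [hA, mem_reachSet]
  have hzp : ∀ a' ∈ A, ∃ F : Finset E, (∀ e ∈ F, w e = 0) ∧
      ∀ z, G.bd F z = ind {a} z + ind {a'} z := by
    intro a' h
    rw [hA, mem_reachSet] at h
    exact path_join G _ _ _ h
  have hcutpos : ∀ e ∈ G.cut A, 0 < w e := by
    intro e he
    rw [mem_cut] at he
    rcases (hw e).lt_or_eq with h | h
    · exact h
    · exact absurd (reach_closed G (fun e => w e = 0) a e h.symm) he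
  have hbA : b ∉ A := by
    intro hb
    obtain ⟨F, hF, hFb⟩ := hzp b hb
    have := hmin (K ∆ F) (fun v => by
      rw [bd_symmDiff, hK, hFb]
      linear_combination z2_add_self (ind {a} v + ind {b} v))
    rw [wt_zero w K F hF] at this
    linarith
  -- minimal joins do not cross
  have hcross : ∀ K', (∀ v, G.bd K' v = t v + (ind {a} v + ind {b} v)) → wt w K' ≤ wt w K →
      ∀ e ∈ G.cut A, e ∉ K' := by
    intro K' hK' hle e he heK
    have hwe := hcutpos e he
    obtain ⟨a', v', ha', hsum⟩ : ∃ a' v', a' ∈ A ∧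
        ∀ z, G.bd {e} z = ind {a'} z + ind {v'} z := by
      rw [mem_cut] at he
      by_cases h1 : G.fst e ∈ A
      · exact ⟨G.fst e, G.snd e, h1, fun z => bd_single G e z⟩
      · have h2 : G.snd e ∈ A := by tauto
        exact ⟨G.snd e, G.fst e, h2, fun z => by rw [bd_single, add_comm]⟩
    obtain ⟨F, hF, hFb⟩ := hzp a' ha'
    have := hKmin' v' b ((K' ∆ {e}) ∆ F) (fun z => by
      rw [bd_symmDiff, bd_symmDiff, hK', hsum, hFb]
      linear_combination z2_add_self (ind {a} z + ind {a'} z))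
    rw [wt_zero w _ F hF, wt_erase w K' e heK] at this
    linarith
  have hKc : K ∩ G.cut A = ∅ := by
    ext e
    simp only [Finset.mem_inter, Finset.notMem_empty, iff_false, not_and]
    exact fun h1 h2 => hcross K hK le_rfl e h2 h1
  have hAodd : ∑ v ∈ A, t v = 1 := by
    have h1 := sum_bd G K A
    rw [hKc] at h1
    simp only [hK, Finset.sum_add_distrib] at h1
    simp [ind, haA, hbA] at h1
    have := z2_add_self (1 : ZMod 2)
    linear_combination h1 - this
  refine ⟨A, hAodd, hcutpos, ?_⟩
  intro J hJ hJle
  have hodd : ((J ∩ G.cut A).card : ZMod 2) = 1 := by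
    rw [← sum_bd]; simp only [hJ]; exact hAodd
  by_contra hne
  have h2 : 1 < (J ∩ G.cut A).card := by
    rcases Nat.lt_or_ge 1 (J ∩ G.cut A).card with h | h
    · exact h
    · have : (J ∩ G.cut A).card = 0 := by omega
      rw [this] at hodd; simp at hodd
  obtain ⟨e1, he1, e2, he2, h12⟩ := Finset.one_lt_card.mp h2
  rw [Finset.mem_inter] at he1 he2
  -- it suffices to find a good cycle
  suffices hQ : ∃ Q : Finset E, (∀ v, G.bd Q v = 0) ∧ (∀ e ∈ Q, w e = 0 ∨ e ∈ J ∆ K) ∧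
      ∃ e ∈ Q, e ∈ G.cut A by
    obtain ⟨Q, hQ0, hQs, e, heQ, hec⟩ := hQ
    have h3 := wt_swap w J K Q hQs
    have h4 := hmin (J ∆ Q) (fun v => by rw [bd_symmDiff, hQ0, hJ, add_zero])
    have h5 := hcross (K ∆ Q) (fun v => by rw [bd_symmDiff, hQ0, hK, add_zero]) (by linarith)
      e hec
    have h6 := hcross K hK le_rfl e hec
    exact h5 (by rw [Finset.mem_symmDiff]; exact Or.inr ⟨heQ, h6⟩)
  set D := J ∆ K with hD
  have hDb : ∀ v, G.bd D v = ind {a} v + ind {b} v := by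
    intro v
    rw [hD, bd_symmDiff, hJ, hK]
    linear_combination z2_add_self (t v)
  have hmemD : ∀ e ∈ J, e ∈ G.cut A → e ∈ D := by
    intro e h1 h2
    rw [hD, Finset.mem_symmDiff]
    exact Or.inl ⟨h1, hcross K hK le_rfl e h2⟩
  obtain ⟨a1, v1, ha1, hsum⟩ : ∃ a' v', a' ∈ A ∧
      ∀ z, G.bd {e1} z = ind {a'} z + ind {v'} z := by
    have he := he1.2
    rw [mem_cut] at he
    by_cases h1 : G.fst e1 ∈ A
    · exact ⟨G.fst e1, G.snd e1, h1, fun z => bd_single G e1 z⟩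
    · have h2 : G.snd e1 ∈ A := by tauto
      exact ⟨G.snd e1, G.fst e1, h2, fun z => by rw [bd_single, add_comm]⟩
  obtain ⟨F, hF, hFb⟩ := hzp a1 ha1
  set P : E → Prop := fun e => w e = 0 ∨ (e ∈ D ∧ e ≠ e1) with hP
  set B := G.reachSet P a with hB
  have hAB : A ⊆ B := by
    intro z hz
    rw [hA, mem_reachSet] at hz
    rw [hB, mem_reachSet]
    refine Relation.ReflTransGen.mono ?_ _ _ hz
    rintro x y ⟨e, he, h⟩
    exact ⟨e, Or.inl he, h⟩
  have hwe1 := hcutpos e1 he1.2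
  by_cases hv1 : v1 ∈ B
  · obtain ⟨R, hR, hRb⟩ := path_join G P a v1 (by rwa [hB, mem_reachSet] at hv1)
    have he1R : e1 ∉ R := by
      intro h
      rcases hR e1 h with h | h
      · linarith
      · exact h.2 rfl
    have he1F : e1 ∉ F := by
      intro h
      have := hF e1 h
      linarith
    refine ⟨(R ∆ F) ∆ {e1}, ?_, ?_, e1, ?_, he1.2⟩
    · intro z
      rw [bd_symmDiff, bd_symmDiff, hsum, hRb, hFb]
      linear_combination z2_add_self (ind {a} z) + z2_add_self (ind {a1} z) +
        z2_add_self (ind {v1} z)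
    · intro e he
      by_cases hee : e = e1
      · subst hee; exact Or.inr (hmemD _ he1.1 he1.2)
      · simp only [Finset.mem_symmDiff, Finset.mem_singleton, hee] at he
        have : e ∈ R ∨ e ∈ F := by tauto
        rcases this with h | h
        · rcases hR e h with h | h
          · exact Or.inl h
          · exact Or.inr h.1
        · exact Or.inl (hF e h)
    · simp [Finset.mem_symmDiff, he1R, he1F]
  · set H := (D ∆ {e1}).filter (fun e => G.fst e ∈ B) with hH
    have hmD : ∀ e, e ∈ D ∆ {e1} ↔ e ∈ D ∧ e ≠ e1 := by
      intro e
      have := hmemD e1 he1.1 he1.2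
      by_cases hee : e = e1
      · subst hee; simp [Finset.mem_symmDiff, this]
      · simp [Finset.mem_symmDiff, hee]
    have hHb : ∀ v, G.bd H v = if v ∈ B then G.bd (D ∆ {e1}) v else 0 := by
      intro v
      unfold bd
      rw [hH, Finset.sum_filter]
      have key : ∀ e ∈ D ∆ {e1}, (G.fst e ∈ B ↔ G.snd e ∈ B) := by
        intro e he
        exact reach_closed G P a e (Or.inr ((hmD e).1 he))
      split_ifs with hv
      · refine Finset.sum_congr rfl fun e he => ?_
        have := key e he
        by_cases hf : G.fst e ∈ B
        · simp [hf]
        · have hs : G.snd e ∉ B := by tauto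
          have n1 : G.fst e ≠ v := fun h => hf (h ▸ hv)
          have n2 : G.snd e ≠ v := fun h => hs (h ▸ hv)
          simp [inc, n1, n2]
      · refine Finset.sum_eq_zero fun e he => ?_
        have := key e he
        by_cases hf : G.fst e ∈ B
        · have hs : G.snd e ∈ B := by tauto
          have n1 : G.fst e ≠ v := fun h => hv (h ▸ hf)
          have n2 : G.snd e ≠ v := fun h => hv (h ▸ hs)
          simp [inc, n1, n2]
        · simp [hf]
    have hDe : ∀ v, G.bd (D ∆ {e1}) v =
        ind {a} v + ind {b} v + (ind {a1} v + ind {v1} v) := by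
      intro v
      rw [bd_symmDiff, hDb, hsum]
    have haB := hAB haA
    have ha1B := hAB ha1
    have hbB : b ∉ B := by
      intro hb
      have h1 := sum_bd_univ G H
      simp only [hHb, hDe] at h1
      rw [Finset.sum_ite_mem, Finset.univ_inter] at h1
      simp only [Finset.sum_add_distrib] at h1
      simp [ind, haB, ha1B, hb, hv1] at h1
      revert h1; decide
    refine ⟨H ∆ F, ?_, ?_, e2, ?_, he2.2⟩
    · intro v
      rw [bd_symmDiff, hHb, hDe, hFb]
      by_cases hv : v ∈ B
      · have nb : ind {b} v = 0 := by
          simp only [ind, Finset.mem_singleton, ite_eq_right_iff]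
          rintro rfl; exact absurd hv hbB
        have nv : ind {v1} v = 0 := by
          simp only [ind, Finset.mem_singleton, ite_eq_right_iff]
          rintro rfl; exact absurd hv hv1
        rw [if_pos hv, nb, nv]
        linear_combination z2_add_self (ind {a} v) + z2_add_self (ind {a1} v)
      · have na : ind {a} v = 0 := by
          simp only [ind, Finset.mem_singleton, ite_eq_right_iff]
          rintro rfl; exact absurd haB hv
        have na1 : ind {a1} v = 0 := by
          simp only [ind, Finset.mem_singleton, ite_eq_right_iff]
          rintro rfl; exact absurd ha1B hv
        rw [if_neg hv, na, na1]; simp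
    · intro e he
      rw [Finset.mem_symmDiff] at he
      rcases he with he | he
      · rw [hH, Finset.mem_filter, hmD] at he
        exact Or.inr he.1.1.1
      · exact Or.inl (hF e he.1)
    · rw [Finset.mem_symmDiff]
      left
      constructor
      · rw [hH, Finset.mem_filter, hmD]
        refine ⟨⟨hmemD _ he2.1 he2.2, fun h => h12 h.symm⟩, ?_⟩
        have h7 := he2.2
        rw [mem_cut] at h7
        by_cases hf : G.fst e2 ∈ A
        · exact hAB hf
        · have hs : G.snd e2 ∈ A := by tauto
          rw [reach_closed G P a e2 (Or.inr ⟨hmemD _ he2.1 he2.2, fun h => h12 h.symm⟩)]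
          exact hAB hs
      · intro h
        have := hF e2 h
        have := hcutpos e2 he2.2
        linarith

end MultiGraph
namespace MultiGraph
variable {V E : Type*} [Fintype V] [DecidableEq V] [Fintype E] [DecidableEq E]

/-- Edmonds–Johnson: the `T`-join polyhedron. -/
theorem tjoin (G : MultiGraph V E) (w : E → ℝ) (hw : ∀ e, 0 ≤ w e) (y : E → ℝ)
    (hy : ∀ e, 0 ≤ y e) (t : V → ZMod 2) (hex : ∃ J : Finset E, ∀ v, G.bd J v = t v)
    (hcut : ∀ U : Finset V, ∑ v ∈ U, t v = 1 → 1 ≤ ∑ e ∈ G.cut U, y e) :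
    ∃ J : Finset E, (∀ v, G.bd J v = t v) ∧ wt w J ≤ ∑ e, w e * y e := by
  by_contra hcon
  push Not at hcon
  obtain ⟨J1, hJ1⟩ := hex
  have hmin : ∀ w' : E → ℝ, ∃ J0 : Finset E, (∀ v, G.bd J0 v = t v) ∧
      ∀ J, (∀ v, G.bd J v = t v) → wt w' J0 ≤ wt w' J := by
    intro w'
    obtain ⟨J0, h1, h2⟩ := Finset.exists_min_image
      (univ.filter fun J : Finset E => ∀ v, G.bd J v = t v) (wt w') ⟨J1, by simpa using hJ1⟩
    exact ⟨J0, by simpa using h1, fun J hJ => h2 J (by simpa using hJ)⟩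
  obtain ⟨J0, hJ0, hJ0min⟩ := hmin w
  obtain ⟨δ, hδ⟩ : ∃ δ, δ = wt w J0 - ∑ e, w e * y e := ⟨_, rfl⟩
  have hδ0 : 0 < δ := by rw [hδ]; linarith [hcon J0 hJ0]
  let s : Set (E → ℝ) := Set.Icc 0 w ∩
    {w' | ∀ J : Finset E, (∀ v, G.bd J v = t v) → δ ≤ wt w' J - ∑ e, w' e * y e}
  have hs : IsCompact s := by
    refine isCompact_Icc.inter_right ?_
    simp only [Set.ofPred_forall]
    refine isClosed_iInter fun J => isClosed_iInter fun _ => ?_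
    refine isClosed_le continuous_const ?_
    unfold wt
    fun_prop
  have hws : w ∈ s := by
    refine ⟨⟨fun e => hw e, le_rfl⟩, fun J hJ => ?_⟩
    rw [hδ]; linarith [hJ0min J hJ]
  obtain ⟨w', hw's, hw'min⟩ := hs.exists_isMinOn ⟨w, hws⟩
    (f := fun w' : E → ℝ => ∑ e, w' e) (by fun_prop)
  obtain ⟨⟨hw0, hwle⟩, hwJ⟩ := hw's
  have hw0 : ∀ e, 0 ≤ w' e := hw0
  obtain ⟨K, hK, hKmin⟩ := hmin w'
  have hKpos : 0 < wt w' K := by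
    have h1 := hwJ K hK
    have h2 : 0 ≤ ∑ e, w' e * y e := Finset.sum_nonneg fun e _ => mul_nonneg (hw0 e) (hy e)
    linarith
  obtain ⟨U, hU1, hU2, hU3⟩ := good_cut G w' hw0 t K hK hKmin hKpos
  have hε : ∀ᶠ ε in nhdsWithin (0 : ℝ) (Set.Ioi 0), 0 < ε ∧ (∀ e, e ∈ G.cut U → ε ≤ w' e) ∧
      ∀ J : Finset E, wt w' K < wt w' J → wt w' K ≤ wt w' J - ε * (Fintype.card E) := by
    refine Filter.Eventually.and self_mem_nhdsWithin (Filter.Eventually.and ?_ ?_)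
    · rw [Filter.eventually_all]
      intro e
      by_cases he : e ∈ G.cut U
      · have : ∀ᶠ ε in nhdsWithin (0 : ℝ) (Set.Ioi 0), ε < w' e :=
          (eventually_lt_nhds (hU2 e he)).filter_mono nhdsWithin_le_nhds
        filter_upwards [this] with ε h _ using h.le
      · exact Filter.Eventually.of_forall fun ε h => absurd h he
    · rw [Filter.eventually_all]
      intro J
      by_cases hJ : wt w' K < wt w' J
      · have hc : Filter.Tendsto (fun ε : ℝ => wt w' J - ε * (Fintype.card E)) (nhds 0)
            (nhds (wt w' J - 0 * (Fintype.card E))) := by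
          apply Continuous.tendsto; fun_prop
        have : ∀ᶠ ε in nhdsWithin (0 : ℝ) (Set.Ioi 0),
            wt w' K < wt w' J - ε * (Fintype.card E) :=
          (hc.eventually_const_lt (by simpa using hJ)).filter_mono nhdsWithin_le_nhds
        filter_upwards [this] with ε h _ using h.le
      · exact Filter.Eventually.of_forall fun ε h => absurd h hJ
  obtain ⟨ε, hε0, hε1, hε2⟩ := hε.exists
  let w2 : E → ℝ := fun e => w' e - if e ∈ G.cut U then ε else 0
  have hw2J : ∀ J : Finset E, wt w2 J = wt w' J - ε * (J ∩ G.cut U).card := by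
    intro J
    simp only [wt, w2, Finset.sum_sub_distrib]
    rw [Finset.sum_ite_mem]
    simp [mul_comm]
  have hw2y : ∑ e, w2 e * y e = ∑ e, w' e * y e - ε * ∑ e ∈ G.cut U, y e := by
    simp only [w2, sub_mul, Finset.sum_sub_distrib, ite_mul, zero_mul]
    rw [Finset.sum_ite_mem, Finset.univ_inter, Finset.mul_sum]
  have hcy := hcut U hU1
  have hcy' : ε ≤ ε * ∑ e ∈ G.cut U, y e := le_mul_of_one_le_right hε0.le hcy
  have hw2s : w2 ∈ s := by
    refine ⟨⟨fun e => ?_, fun e => ?_⟩, fun J hJ => ?_⟩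
    · simp only [w2, Pi.zero_apply]
      split_ifs with h
      · linarith [hε1 e h]
      · linarith [hw0 e]
    · have := hwle e
      simp only [w2]
      split_ifs with h <;> linarith
    · rw [hw2J, hw2y]
      rcases lt_or_ge (wt w' K) (wt w' J) with h | h
      · have h1 := hε2 J h
        have h2 : ((J ∩ G.cut U).card : ℝ) ≤ Fintype.card E := by
          exact_mod_cast Finset.card_le_univ _
        have h3 := mul_le_mul_of_nonneg_left h2 hε0.le
        have h4 := hwJ K hK
        linarith
      · rw [hU3 J hJ h]
        have h4 := hwJ J hJ
        push_cast
        linarith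
  have hlt := hw'min hw2s
  simp only [Set.mem_ofPred_eq] at hlt
  have h5 : ∑ e, w2 e = ∑ e, w' e - ε * (G.cut U).card := by
    simp only [w2, Finset.sum_sub_distrib]
    rw [Finset.sum_ite_mem]
    simp [mul_comm]
  have h6 : 0 < (G.cut U).card := by
    have := hU3 K hK le_rfl
    have h7 : (K ∩ G.cut U).card ≤ (G.cut U).card := Finset.card_le_card Finset.inter_subset_right
    omega
  have h8 : (0 : ℝ) < (G.cut U).card := by exact_mod_cast h6
  have := mul_pos hε0 h8
  linarith

/-- Potentials that are constant along the edges of a connected graph are constant. -/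
lemma const_of_connected (G : MultiGraph V E) (P : E → Prop) (hP : G.ConnectedOn P)
    (h : V → ZMod 2) (hh : ∀ e, P e → h (G.fst e) + h (G.snd e) = 0) (u v : V) :
    h u = h v := by
  have key : ∀ e, P e → h (G.fst e) = h (G.snd e) := by
    intro e he
    linear_combination hh e he - z2_add_self (h (G.snd e))
  have := hP u v
  induction this with
  | refl => rfl
  | tail _ hbc ih =>
    obtain ⟨e, he, ⟨h1, h2⟩ | ⟨h1, h2⟩⟩ := hbc
    · rw [ih, ← h1, ← h2, key e he]
    · rw [ih, ← h1, ← h2, key e he]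

lemma connected_of_cuts (G : MultiGraph V E) (P : E → Prop)
    (h : ∀ W : Finset V, W.Nonempty → W ≠ univ → ∃ e ∈ G.cut W, P e) : G.ConnectedOn P := by
  intro u w
  by_contra hcon
  obtain ⟨e, he, hPe⟩ := h (G.reachSet P u) ⟨u, by rw [mem_reachSet]⟩ (by
    intro h
    have : w ∈ G.reachSet P u := by rw [h]; simp
    rw [mem_reachSet] at this
    exact hcon this)
  rw [mem_cut] at he
  exact he (reach_closed G P u e hPe)

lemma exists_of_connected (G : MultiGraph V E) (P : E → Prop) (hP : G.ConnectedOn P)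
    (W : Finset V) (h1 : W.Nonempty) (h2 : W ≠ univ) : ∃ e ∈ G.cut W, P e := by
  by_contra hcon
  push Not at hcon
  obtain ⟨u, hu⟩ := h1
  obtain ⟨v, hv⟩ : ∃ v, v ∉ W := by
    by_contra h
    push Not at h
    exact h2 (Finset.eq_univ_iff_forall.mpr h)
  have := const_of_connected G P hP (ind W) (fun e he => by
    rw [mem_cut_ind, if_neg (fun h => hcon e h he)]) u v
  simp [ind, hu, hv] at this

lemma mem_cut_iff_ind (G : MultiGraph V E) (U : Finset V) (e : E) :
    e ∈ G.cut U ↔ ind U (G.fst e) + ind U (G.snd e) = 1 := by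
  rw [mem_cut_ind]; split_ifs with h <;> simp [h]

/-- Fundamental cuts are unique. -/
lemma cut_unique (G : MultiGraph V E) (S : Finset E) (hS : G.ConnectedOn (· ∈ S))
    (U U' : Finset V) (h : S ∩ G.cut U = S ∩ G.cut U') : G.cut U = G.cut U' := by
  have := const_of_connected G _ hS (fun v => ind U v + ind U' v) (fun e he => by
    have h1 := mem_cut_ind G e U
    have h2 := mem_cut_ind G e U'
    have h3 : e ∈ G.cut U ↔ e ∈ G.cut U' := by
      have := Finset.ext_iff.mp h e
      simpa [he] using this
    simp only [h3] at h1
    linear_combination h1 + h2 + z2_add_self (if e ∈ G.cut U' then (1 : ZMod 2) else 0))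
  ext e
  rw [mem_cut_iff_ind, mem_cut_iff_ind]
  have h4 := this (G.fst e) (G.snd e)
  have h5 : ind U (G.fst e) + ind U (G.snd e) = ind U' (G.fst e) + ind U' (G.snd e) := by
    linear_combination h4 - z2_add_self (ind U' (G.fst e)) + z2_add_self (ind U (G.snd e))
  rw [h5]

/-- Number of classes cut out by independent cuts. -/
lemma partition_bound (G : MultiGraph V E) [Nonempty V] (S : Finset E) (L : Finset E)
    (U : E → Finset V) (hU : ∀ f ∈ L, S ∩ G.cut (U f) = {f}) :
    L.card + 1 ≤ (univ.image fun v : V => L.filter fun f => v ∈ U f).card := by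
  induction L using Finset.induction_on with
  | empty => simp
  | insert f L hf ih =>
    have ih := ih fun g hg => hU g (Finset.mem_insert_of_mem hg)
    rw [Finset.card_insert_of_notMem hf]
    refine Nat.succ_le_of_lt (lt_of_le_of_lt ih ?_)
    have hfS : f ∈ S ∩ G.cut (U f) := by rw [hU f (Finset.mem_insert_self _ _)]; simp
    rw [Finset.mem_inter, mem_cut] at hfS
    have hfg : ∀ g ∈ L, (G.fst f ∈ U g ↔ G.snd f ∈ U g) := by
      intro g hg
      by_contra hcon
      have : f ∈ S ∩ G.cut (U g) := by rw [Finset.mem_inter, mem_cut]; exact ⟨hfS.1, hcon⟩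
      rw [hU g (Finset.mem_insert_of_mem hg), Finset.mem_singleton] at this
      exact hf (this ▸ hg)
    -- project
    have himg : (univ.image fun v : V => L.filter fun g => v ∈ U g) =
        (univ.image fun v : V => (insert f L).filter fun g => v ∈ U g).image
          (fun A => A.erase f) := by
      rw [Finset.image_image]
      refine Finset.image_congr fun v _ => ?_
      ext g
      simp only [Function.comp, Finset.mem_filter, Finset.mem_erase, Finset.mem_insert]
      constructor
      · rintro ⟨h1, h2⟩
        exact ⟨fun h => hf (h ▸ h1), Or.inr h1, h2⟩
      · rintro ⟨h1, h2, h3⟩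
        exact ⟨h2.resolve_left h1, h3⟩
    rw [himg]
    refine lt_of_le_of_ne Finset.card_image_le ?_
    intro heq
    rw [Finset.card_image_iff] at heq
    have := heq (x₁ := (insert f L).filter fun g => G.fst f ∈ U g) (by exact_mod_cast Finset.mem_image_of_mem _ (Finset.mem_univ (G.fst f)))
      (x₂ := (insert f L).filter fun g => G.snd f ∈ U g) (by exact_mod_cast Finset.mem_image_of_mem _ (Finset.mem_univ (G.snd f))) (by
        ext g
        simp only [Finset.mem_filter, Finset.mem_erase, Finset.mem_insert]
        constructor
        · rintro ⟨h1, h2, h3⟩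
          have h2 := h2.resolve_left h1
          exact ⟨h1, Or.inr h2, (hfg g h2).1 h3⟩
        · rintro ⟨h1, h2, h3⟩
          have h2 := h2.resolve_left h1
          exact ⟨h1, Or.inr h2, (hfg g h2).2 h3⟩)
    apply hfS.2
    have h6 := Finset.ext_iff.mp this f
    simpa using h6

lemma union_bound (G : MultiGraph V E) [Nonempty V] (T : Finset V) (x : E → ℝ)
    (hx : G.LPFeasible T x) (S : Finset E) (L : Finset E)
    (U : E → Finset V) (hU : ∀ f ∈ L, S ∩ G.cut (U f) = {f}) :
    (L.card : ℝ) ≤ ∑ e ∈ univ.filter (fun e => ∃ f ∈ L, e ∈ G.cut (U f)), x e := by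
  let r : Setoid V := Setoid.ker fun v : V => L.filter fun f => v ∈ U f
  let W : Finpartition (univ : Finset V) := Finpartition.ofSetoid r
  have hW : ∀ u v, (∃ P ∈ W.parts, u ∈ P ∧ v ∈ P) ↔
      (L.filter fun f => u ∈ U f) = L.filter fun f => v ∈ U f := by
    intro u v
    rw [← Finpartition.mem_part_iff_exists, Finpartition.mem_part_ofSetoid_iff_rel]
    exact ⟨fun h => h.symm, fun h => h.symm⟩
  have hcard : L.card + 1 ≤ W.parts.card := by
    refine (partition_bound G S L U hU).trans ?_
    refine Finset.card_le_card_of_surjOn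
      (fun P => if h : P.Nonempty then L.filter (fun f => h.choose ∈ U f) else ∅) ?_
    intro A hA
    simp only [Finset.coe_image, Set.mem_image, Finset.coe_univ, Set.mem_univ, true_and] at hA
    obtain ⟨v, rfl⟩ := hA
    have hv : ∃ P ∈ W.parts, v ∈ P ∧ v ∈ P := (hW v v).2 rfl
    obtain ⟨P, hP, hvP, _⟩ := hv
    refine ⟨P, hP, ?_⟩
    have hne : P.Nonempty := ⟨v, hvP⟩
    simp only [dif_pos hne]
    exact (hW _ _).1 ⟨P, hP, hne.choose_spec, hvP⟩
  have h1 := hx.2.2 W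
  have h2 : ((L.card : ℝ) + 1) ≤ W.parts.card := by exact_mod_cast hcard
  have h3 : G.partitionCut W = univ.filter (fun e => ∃ f ∈ L, e ∈ G.cut (U f)) := by
    ext e
    simp only [partitionCut, Finset.mem_filter, Finset.mem_univ, true_and]
    have h4 := hW (G.fst e) (G.snd e)
    have h5 : (∀ P ∈ W.parts, ¬(G.fst e ∈ P ∧ G.snd e ∈ P)) ↔
      ¬ ∃ P ∈ W.parts, G.fst e ∈ P ∧ G.snd e ∈ P := by push Not; rfl
    rw [h5, h4, Finset.filter_inj']
    push Not
    simp only [mem_cut]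
    refine exists_congr fun f => and_congr_right fun _ => ?_
    tauto
  rw [← h3]
  linarith

/-- Layer-cake inequality. -/
lemma greedy (x : E → ℝ) (hx : ∀ e, 0 ≤ x e) (C : E → Finset E) (n : ℕ) :
    ∀ (L : Finset E), L.card = n →
    (∀ K ⊆ L, (K.card : ℝ) ≤ ∑ e ∈ univ.filter (fun e => ∃ f ∈ K, e ∈ C f), x e) →
    ∀ (w : E → ℝ), (∀ f ∈ L, 0 ≤ w f) → ∀ M : E → ℝ, (∀ e, 0 ≤ M e) →
    (∀ f ∈ L, ∀ e ∈ C f, w f ≤ M e) → ∑ f ∈ L, w f ≤ ∑ e, x e * M e := by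
  induction n with
  | zero =>
    intro L hL _ w _ M hM _
    rw [Finset.card_eq_zero] at hL
    subst hL
    simp only [Finset.sum_empty]
    exact Finset.sum_nonneg fun e _ => mul_nonneg (hx e) (hM e)
  | succ n ih =>
    intro L hL hK w hw M hM hMw
    have hne : L.Nonempty := by rw [← Finset.card_pos]; omega
    obtain ⟨f0, hf0, hmin⟩ := Finset.exists_min_image L w hne
    have h1 := ih (L.erase f0) (by rw [Finset.card_erase_of_mem hf0]; omega)
      (fun K h => hK K (h.trans (Finset.erase_subset _ _))) (fun f => w f - w f0)
      (fun f hf => by linarith [hmin f (Finset.mem_of_mem_erase hf)])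
      (fun e => M e - if ∃ f ∈ L, e ∈ C f then w f0 else 0)
      (fun e => by
        split_ifs with h
        · obtain ⟨f, hf, he⟩ := h
          linarith [hMw f hf e he, hmin f hf]
        · linarith [hM e])
      (fun f hf e he => by
        have hfL := Finset.mem_of_mem_erase hf
        rw [if_pos ⟨f, hfL, he⟩]
        linarith [hMw f hfL e he])
    have h2 := hK L subset_rfl
    have h3 := mul_le_mul_of_nonneg_left h2 (hw f0 hf0)
    have h4 : ∑ e, x e * (M e - if ∃ f ∈ L, e ∈ C f then w f0 else 0) =
        ∑ e, x e * M e - w f0 * ∑ e ∈ univ.filter (fun e => ∃ f ∈ L, e ∈ C f), x e := by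
      rw [Finset.mul_sum, Finset.sum_filter, ← Finset.sum_sub_distrib]
      refine Finset.sum_congr rfl fun e _ => ?_
      split_ifs <;> ring
    have h5 : ∑ f ∈ L.erase f0, (w f - w f0) = ∑ f ∈ L, w f - w f0 * L.card := by
      rw [Finset.sum_erase L (by simp), Finset.sum_sub_distrib]
      simp [mul_comm]
    rw [h4, h5] at h1
    linarith

end MultiGraph
namespace MultiGraph
variable {V E : Type*} [Fintype V] [DecidableEq V] [Fintype E] [DecidableEq E]

lemma deg_add (G : MultiGraph V E) (F H : Multiset E) (v : V) :
    G.deg (F + H) v = G.deg F v + G.deg H v := by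
  simp [deg]

lemma deg_cast (G : MultiGraph V E) (F : Finset E) (v : V) :
    ((G.deg F.val v : ℕ) : ZMod 2) = G.bd F v := by
  have : G.deg F.val v =
      ∑ e ∈ F, ((if G.fst e = v then 1 else 0) + (if G.snd e = v then 1 else 0)) := rfl
  rw [this]
  simp [bd, inc]

lemma oddVerts_eq (G : MultiGraph V E) (F : Multiset E) (T : Finset V) :
    G.oddVerts F = T ↔ ∀ v, ((G.deg F v : ℕ) : ZMod 2) = ind T v := by
  have : ∀ v, ((G.deg F v : ℕ) : ZMod 2) = ind T v ↔ (v ∈ G.oddVerts F ↔ v ∈ T) := by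
    intro v
    simp only [oddVerts, Finset.mem_filter, Finset.mem_univ, true_and]
    rw [← ZMod.natCast_eq_one_iff_odd]
    by_cases h : v ∈ T
    · simp [ind, h]
    · simp only [ind, h, if_false, iff_false]
      rcases z2 ((G.deg F v : ℕ) : ZMod 2) with h | h <;> simp [h]
  simp only [this]
  exact Finset.ext_iff

lemma sum_ind (T U : Finset V) : ∑ v ∈ U, ind T v = ((T ∩ U).card : ZMod 2) := by
  unfold ind
  rw [Finset.sum_ite_mem, Finset.inter_comm]; simp

lemma wt_biUnion (c : E → ℝ) (hc : ∀ e, 0 ≤ c e) (J : Finset E) (R : E → Finset E) :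
    wt c (J.biUnion R) ≤ ∑ e ∈ J, wt c (R e) := by
  induction J using Finset.induction_on with
  | empty => simp [wt]
  | insert a J ha ih =>
    rw [Finset.biUnion_insert, Finset.sum_insert ha]
    have h1 := Finset.sum_union_inter (s₁ := R a) (s₂ := J.biUnion R) (f := c)
    have h2 := wt_nonneg c hc (R a ∩ J.biUnion R)
    simp only [wt] at *
    linarith

lemma per_tree (G : MultiGraph V E) [Nonempty V] (T : Finset V) (c : E → ℝ)
    (hc : ∀ e, 0 ≤ c e) (x : E → ℝ) (hx : G.LPFeasible T x)
    (hx1 : ∀ U : Finset V, U.Nonempty → U ≠ univ → 1 ≤ ∑ e ∈ G.cut U, x e)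
    (S : Finset E) (hS : G.ConnectedOn (· ∈ S)) (IS : Finset E) (hIS : IS ⊆ S)
    (hIT : G.oddVerts IS.val = T) :
    ∃ F : Multiset E, G.IsTTour T F ∧ (F.map c).sum ≤
      6 / 5 * wt c S + 1 / 5 * wt c IS + 2 / 5 * (∑ e, c e * x e)
      - 2 / 5 * wt c (G.lonelyEdges x S)
      - 2 / 5 * ∑ C ∈ G.lonelyCuts x S, (2 - ∑ f ∈ C, x f) * wt c (S ∩ C) := by
  obtain ⟨L, hLdef⟩ : ∃ L, L = G.lonelyEdges x S := ⟨_, rfl⟩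
  have hx0 := hx.1
  have hIb : ∀ v, G.bd IS v = ind T v := by
    intro v
    rw [← deg_cast]
    exact (oddVerts_eq G IS.val T).1 hIT v
  have hLS : L ⊆ S := by rw [hLdef]; exact Finset.filter_subset _ _
  have hex : ∀ f ∈ L, ∃ U : Finset V, U.Nonempty ∧ U ≠ univ ∧ ∑ e ∈ G.cut U, x e < 2 ∧
      S ∩ G.cut U = {f} := by
    intro f hf
    rw [hLdef, lonelyEdges, Finset.mem_filter] at hf
    obtain ⟨hfS, C, ⟨⟨⟨U, h1, h2, rfl⟩, h3⟩, h4⟩, hfC⟩ := hf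
    refine ⟨U, h1, h2, h3, ?_⟩
    obtain ⟨g, hg⟩ := Finset.card_eq_one.mp h4
    have : f ∈ S ∩ G.cut U := Finset.mem_inter.mpr ⟨hfS, hfC⟩
    rw [hg, Finset.mem_singleton] at this
    rw [hg, this]
  choose! U hU using hex
  have hUS : ∀ f ∈ L, S ∩ G.cut (U f) = {f} := fun f hf => (hU f hf).2.2.2
  have hfcut : ∀ f ∈ L, f ∈ G.cut (U f) := by
    intro f hf
    have : f ∈ S ∩ G.cut (U f) := by rw [hUS f hf]; simp
    exact (Finset.mem_inter.mp this).2
  have hScut : ∀ f ∈ L, ∀ e ∈ S, e ∈ G.cut (U f) → e = f := by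
    intro f hf e he h
    have : e ∈ S ∩ G.cut (U f) := Finset.mem_inter.mpr ⟨he, h⟩
    rw [hUS f hf, Finset.mem_singleton] at this
    exact this
  -- narrow cuts are T-odd
  have hnarrow : ∀ W : Finset V, W.Nonempty → W ≠ univ → ∑ e ∈ G.cut W, x e < 2 →
      ∑ v ∈ W, ind T v = 1 := by
    intro W h1 h2 h3
    rw [sum_ind, ZMod.natCast_eq_one_iff_odd, ← Nat.not_even_iff_odd]
    intro h
    linarith [hx.2.1 W h1 h2 h]
  have hLI : L ⊆ IS := by
    intro f hf
    have h1 := hnarrow (U f) (hU f hf).1 (hU f hf).2.1 (hU f hf).2.2.1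
    have h2 := sum_bd G IS (U f)
    simp only [hIb, h1] at h2
    have h3 : (IS ∩ G.cut (U f)).Nonempty := by
      rw [Finset.nonempty_iff_ne_empty]
      intro h
      rw [h] at h2
      simp at h2
    obtain ⟨g, hg⟩ := h3
    rw [Finset.mem_inter] at hg
    rw [← hScut f hf g (hIS hg.1) hg.2]
    exact hg.1
  -- bijection between lonely edges and lonely cuts
  have hlonely : ∀ f ∈ L, G.cut (U f) ∈ G.lonelyCuts x S := by
    intro f hf
    rw [lonelyCuts, Finset.mem_filter]
    refine ⟨Finset.mem_univ _, ⟨⟨U f, (hU f hf).1, (hU f hf).2.1, rfl⟩, (hU f hf).2.2.1⟩, ?_⟩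
    rw [hUS f hf]; simp
  have hlonely' : ∀ W : Finset V, W.Nonempty → W ≠ univ → ∑ e ∈ G.cut W, x e < 2 →
      (S ∩ G.cut W).card = 1 → ∃ f ∈ L, S ∩ G.cut W = {f} ∧ G.cut W = G.cut (U f) := by
    intro W h1 h2 h3 h4
    obtain ⟨f, hf⟩ := Finset.card_eq_one.mp h4
    have hfm : f ∈ S ∩ G.cut W := by rw [hf]; simp
    rw [Finset.mem_inter] at hfm
    have hfL : f ∈ L := by
      rw [hLdef, lonelyEdges, Finset.mem_filter]
      exact ⟨hfm.1, G.cut W, ⟨⟨⟨W, h1, h2, rfl⟩, h3⟩, h4⟩, hfm.2⟩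
    exact ⟨f, hfL, hf, cut_unique G S hS _ _ (by rw [hf, hUS f hfL])⟩
  have hsumL : ∑ C ∈ G.lonelyCuts x S, (2 - ∑ f ∈ C, x f) * wt c (S ∩ C) =
      ∑ f ∈ L, (2 - ∑ e ∈ G.cut (U f), x e) * c f := by
    symm
    refine Finset.sum_bij (fun f _ => G.cut (U f)) hlonely ?_ ?_ ?_
    · intro f hf g hg h
      exact hScut g hg f (hLS hf) (h ▸ hfcut f hf)
    · intro C hC
      rw [lonelyCuts, Finset.mem_filter] at hC
      obtain ⟨_, ⟨⟨W, h1, h2, rfl⟩, h3⟩, h4⟩ := hC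
      obtain ⟨f, hf, _, h⟩ := hlonely' W h1 h2 h3 h4
      exact ⟨f, hf, h.symm⟩
    · intro f hf
      rw [hUS f hf]; simp [wt]
  rw [hsumL, ← hLdef]
  -- modified costs
  let N : E → Finset E := fun e => L.filter fun f => e ∈ G.cut (U f)
  have hg : ∀ e, ∃ g, (N e).Nonempty → g ∈ N e ∧ ∀ f ∈ N e, c f ≤ c g := by
    intro e
    by_cases h : (N e).Nonempty
    · obtain ⟨g, h1, h2⟩ := Finset.exists_max_image (N e) c h
      exact ⟨g, fun _ => ⟨h1, h2⟩⟩
    · exact ⟨e, fun h' => absurd h' h⟩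
  choose g hg using hg
  let R : E → Finset E := fun e => (N e).erase (g e)
  let M : E → ℝ := fun e => if (N e).Nonempty then c (g e) else 0
  have hRM : ∀ e, wt c (R e) = wt c (N e) - M e := by
    intro e
    simp only [R, M, wt]
    split_ifs with h
    · rw [Finset.sum_erase_eq_sub (hg e h).1]
    · rw [Finset.not_nonempty_iff_eq_empty] at h
      simp [h]
  have hRS : ∀ e ∈ S, R e = ∅ := by
    intro e he
    ext f
    simp only [R, Finset.mem_erase, Finset.notMem_empty, iff_false, not_and]
    intro hne hf
    have h1 := (hg e ⟨f, hf⟩).1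
    simp only [N, Finset.mem_filter] at hf h1
    have h2 := hScut f hf.1 e he hf.2
    have h3 := hScut _ h1.1 e he h1.2
    exact hne (h2.symm.trans h3)
  let w : E → ℝ := fun e => c e + 2 * wt c (R e)
  have hw0 : ∀ e, 0 ≤ w e := fun e => by
    have := wt_nonneg c hc (R e)
    have := hc e
    simp only [w]; linarith
  let S' := S \ L
  let y : E → ℝ := fun e => 2 / 5 * x e + 1 / 5 * (if e ∈ S' then 1 else 0)
    + 1 / 5 * (if e ∈ IS \ L then 1 else 0)
    + (if e ∈ L then 1 - 2 / 5 * ∑ e' ∈ G.cut (U e), x e' else 0)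
  have hLc : ∀ f ∈ L, 1 / 5 ≤ 1 - 2 / 5 * ∑ e' ∈ G.cut (U f), x e' := by
    intro f hf
    linarith [(hU f hf).2.2.1]
  have hy0 : ∀ e, 0 ≤ y e := by
    intro e
    have h1 := hx0 e
    have h2 : (0 : ℝ) ≤ if e ∈ S' then 1 else 0 := by split_ifs <;> norm_num
    have h3 : (0 : ℝ) ≤ if e ∈ IS \ L then 1 else 0 := by split_ifs <;> norm_num
    have h4 : (0 : ℝ) ≤ if e ∈ L then 1 - 2 / 5 * ∑ e' ∈ G.cut (U e), x e' else 0 := by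
      split_ifs with h
      · linarith [hLc e h]
      · exact le_rfl
    simp only [y]; linarith
  have hycut : ∀ W : Finset V, ∑ v ∈ W, (ind T v + G.bd S' v) = 1 →
      1 ≤ ∑ e ∈ G.cut W, y e := by
    intro W hW
    have hWne : W.Nonempty := by
      rw [Finset.nonempty_iff_ne_empty]; rintro rfl; simp at hW
    have hWu : W ≠ univ := by
      rintro rfl
      rw [Finset.sum_add_distrib, sum_bd_univ] at hW
      simp only [← hIb, sum_bd_univ] at hW
      simp at hW
    have hsum : ∑ e ∈ G.cut W, y e = 2 / 5 * ∑ e ∈ G.cut W, x e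
        + 1 / 5 * ((S' ∩ G.cut W).card : ℝ) + 1 / 5 * (((IS \ L) ∩ G.cut W).card : ℝ)
        + ∑ f ∈ L ∩ G.cut W, (1 - 2 / 5 * ∑ e' ∈ G.cut (U f), x e') := by
      simp only [y, Finset.sum_add_distrib, ← Finset.mul_sum]
      rw [Finset.sum_ite_mem, Finset.sum_ite_mem, Finset.sum_ite_mem]
      simp only [Finset.inter_comm (G.cut W)]
      simp
    have hl : 1 / 5 * ((L ∩ G.cut W).card : ℝ) ≤
        ∑ f ∈ L ∩ G.cut W, (1 - 2 / 5 * ∑ e' ∈ G.cut (U f), x e') := by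
      have := Finset.card_nsmul_le_sum (L ∩ G.cut W)
        (fun f => 1 - 2 / 5 * ∑ e' ∈ G.cut (U f), x e') (1 / 5)
        (fun f hf => hLc f (Finset.mem_inter.mp hf).1)
      rw [nsmul_eq_mul] at this
      linarith
    have hIcard : (IS ∩ G.cut W).card = ((IS \ L) ∩ G.cut W).card + (L ∩ G.cut W).card := by
      rw [← Finset.card_union_of_disjoint]
      · congr 1
        rw [← Finset.union_inter_distrib_right, Finset.sdiff_union_of_subset hLI]
      · rw [Finset.disjoint_left]
        intro e h1 h2
        simp only [Finset.mem_inter, Finset.mem_sdiff] at h1 h2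
        exact h1.1.2 h2.1
    have hScard : (S ∩ G.cut W).card = (S' ∩ G.cut W).card + (L ∩ G.cut W).card := by
      rw [← Finset.card_union_of_disjoint]
      · congr 1
        rw [← Finset.union_inter_distrib_right, Finset.sdiff_union_of_subset hLS]
      · rw [Finset.disjoint_left]
        intro e h1 h2
        simp only [S', Finset.mem_inter, Finset.mem_sdiff] at h1 h2
        exact h1.1.2 h2.1
    have hTodd : ∑ v ∈ W, ind T v = ((IS ∩ G.cut W).card : ZMod 2) := by
      rw [← sum_bd]; simp only [hIb]
    rw [Finset.sum_add_distrib, sum_bd] at hW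
    have hxW1 := hx1 W hWne hWu
    have hSpos : 0 < (S ∩ G.cut W).card := by
      obtain ⟨e, he, heS⟩ := exists_of_connected G _ hS W hWne hWu
      exact Finset.card_pos.mpr ⟨e, Finset.mem_inter.mpr ⟨heS, he⟩⟩
    rcases z2 (∑ v ∈ W, ind T v) with h0 | h1
    · have heven : Even (T ∩ W).card := by
        rw [← ZMod.natCast_eq_zero_iff_even, ← sum_ind, h0]
      have h2 := hx.2.1 W hWne hWu heven
      rw [h0, zero_add, ZMod.natCast_eq_one_iff_odd] at hW
      have h3 : (1 : ℝ) ≤ (S' ∩ G.cut W).card := by exact_mod_cast hW.pos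
      have h4 : (0 : ℝ) ≤ ((IS \ L) ∩ G.cut W).card := Nat.cast_nonneg _
      have h5 : (0 : ℝ) ≤ (L ∩ G.cut W).card := Nat.cast_nonneg _
      rw [hsum]; linarith
    · rw [h1] at hW
      have hev : Even (S' ∩ G.cut W).card := by
        rw [← ZMod.natCast_eq_zero_iff_even]
        linear_combination hW
      have hod : Odd (((IS \ L) ∩ G.cut W).card + (L ∩ G.cut W).card) := by
        rw [← hIcard, ← ZMod.natCast_eq_one_iff_odd, ← hTodd, h1]
      by_cases hn : ∑ e ∈ G.cut W, x e < 2
      · by_cases hone : (S ∩ G.cut W).card = 1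
        · obtain ⟨f, hf, hSf, hcut⟩ := hlonely' W hWne hWu hn hone
          have h6 : L ∩ G.cut W = {f} := by
            apply Finset.Subset.antisymm
            · rw [← hSf]; exact Finset.inter_subset_inter_right hLS
            · rw [Finset.singleton_subset_iff, Finset.mem_inter, hcut]
              exact ⟨hf, hfcut f hf⟩
          have h4 : (0 : ℝ) ≤ ((IS \ L) ∩ G.cut W).card := Nat.cast_nonneg _
          have h5 : (0 : ℝ) ≤ (S' ∩ G.cut W).card := Nat.cast_nonneg _
          rw [hsum, h6, Finset.sum_singleton, ← hcut]
          linarith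
        · have h7 : 3 ≤ (S' ∩ G.cut W).card + ((IS \ L) ∩ G.cut W).card
              + (L ∩ G.cut W).card := by
            obtain ⟨k, hk⟩ := hev
            obtain ⟨m, hm⟩ := hod
            omega
          have h8 : (3 : ℝ) ≤ (S' ∩ G.cut W).card + ((IS \ L) ∩ G.cut W).card
              + (L ∩ G.cut W).card := by exact_mod_cast h7
          rw [hsum]; linarith
      · push Not at hn
        have h7 := hod.pos
        have h8 : (1 : ℝ) ≤ ((IS \ L) ∩ G.cut W).card + (L ∩ G.cut W).card := by
          exact_mod_cast h7
        have h5 : (0 : ℝ) ≤ (S' ∩ G.cut W).card := Nat.cast_nonneg _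
        rw [hsum]; linarith
  obtain ⟨J, hJ, hJw⟩ := tjoin G w hw0 y hy0 (fun v => ind T v + G.bd S' v)
    ⟨IS ∆ S', fun v => by rw [bd_symmDiff, hIb]⟩ hycut
  -- cost of y
  have hwN : ∑ e, x e * wt c (N e) = ∑ f ∈ L, c f * ∑ e ∈ G.cut (U f), x e := by
    simp only [wt, N, Finset.mul_sum, Finset.sum_filter]
    rw [Finset.sum_comm]
    refine Finset.sum_congr rfl fun f _ => ?_
    simp only [mul_ite, mul_zero]
    rw [Finset.sum_ite_mem, Finset.univ_inter]
    exact Finset.sum_congr rfl fun e _ => mul_comm _ _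
  have hMbound : ∑ f ∈ L, c f ≤ ∑ e, x e * M e := by
    refine greedy x hx0 (fun f => G.cut (U f)) L.card L rfl ?_ c (fun f _ => hc f) M ?_ ?_
    · intro K hK
      exact union_bound G T x hx S K U fun f hf => hUS f (hK hf)
    · intro e
      simp only [M]; split_ifs
      · exact hc _
      · exact le_rfl
    · intro f hf e he
      have hfN : f ∈ N e := by simp only [N, Finset.mem_filter]; exact ⟨hf, he⟩
      have hne : (N e).Nonempty := ⟨f, hfN⟩
      simp only [M, if_pos hne]
      exact (hg e hne).2 f hfN
  have hwx : ∑ e, w e * x e ≤ ∑ e, c e * x e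
      + 2 * (∑ f ∈ L, c f * ∑ e ∈ G.cut (U f), x e - ∑ f ∈ L, c f) := by
    have : ∑ e, w e * x e = ∑ e, c e * x e
        + 2 * (∑ e, x e * wt c (N e) - ∑ e, x e * M e) := by
      rw [← Finset.sum_sub_distrib, Finset.mul_sum, ← Finset.sum_add_distrib]
      refine Finset.sum_congr rfl fun e _ => ?_
      simp only [w, hRM]; ring
    rw [this, hwN]; linarith
  have hwS : ∀ e ∈ S, w e = c e := by
    intro e he
    simp [w, hRS e he, wt]
  have hwsub : ∀ (K : Finset E) (a : E → ℝ), K ⊆ S →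
      ∑ e, w e * (if e ∈ K then a e else 0) = ∑ e ∈ K, c e * a e := by
    intro K a hK
    simp only [mul_ite, mul_zero]
    rw [Finset.sum_ite_mem, Finset.univ_inter]
    exact Finset.sum_congr rfl fun e he => by rw [hwS e (hK he)]
  have hwy : ∑ e, w e * y e = 2 / 5 * ∑ e, w e * x e + 1 / 5 * wt c S' + 1 / 5 * wt c (IS \ L)
      + ∑ f ∈ L, c f * (1 - 2 / 5 * ∑ e' ∈ G.cut (U f), x e') := by
    have h1 := hwsub S' (fun _ => 1) Finset.sdiff_subset
    have h2 := hwsub (IS \ L) (fun _ => 1) (Finset.sdiff_subset.trans hIS)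
    have h3 := hwsub L (fun f => 1 - 2 / 5 * ∑ e' ∈ G.cut (U f), x e') hLS
    simp only [mul_one] at h1 h2
    rw [wt, wt, ← h1, ← h2, ← h3]
    simp only [Finset.mul_sum (a := (2 / 5 : ℝ)), Finset.mul_sum (a := (1 / 5 : ℝ)),
      ← Finset.sum_add_distrib]
    refine Finset.sum_congr rfl fun e _ => ?_
    simp only [y, ← Finset.mul_sum]; ring
  have hcS' : wt c S' = wt c S - wt c L := by
    have := Finset.sum_sdiff (f := c) hLS
    simp only [wt, S']; linarith
  have hcI : wt c (IS \ L) = wt c IS - wt c L := by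
    have := Finset.sum_sdiff (f := c) hLI
    simp only [wt]; linarith
  have hLexp : ∑ f ∈ L, c f * (1 - 2 / 5 * ∑ e' ∈ G.cut (U f), x e') =
      wt c L - 2 / 5 * ∑ f ∈ L, c f * ∑ e ∈ G.cut (U f), x e := by
    rw [wt, Finset.mul_sum, ← Finset.sum_sub_distrib]
    exact Finset.sum_congr rfl fun f _ => by ring
  have hLexp2 : ∑ f ∈ L, (2 - ∑ e ∈ G.cut (U f), x e) * c f =
      2 * wt c L - ∑ f ∈ L, c f * ∑ e ∈ G.cut (U f), x e := by
    rw [wt, Finset.mul_sum, ← Finset.sum_sub_distrib]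
    exact Finset.sum_congr rfl fun f _ => by ring
  -- the tour
  let D : Finset E := J.biUnion R
  have hD : wt c D ≤ ∑ e ∈ J, wt c (R e) :=
    wt_biUnion c hc J R
  have hwJ : wt w J = wt c J + 2 * ∑ e ∈ J, wt c (R e) := by
    simp only [wt, w, Finset.sum_add_distrib, Finset.mul_sum]
  refine ⟨S'.val + J.val + (D.val + D.val), ⟨?_, ?_⟩, ?_⟩
  · apply connected_of_cuts
    intro W hW1 hW2
    by_contra hcon
    push Not at hcon
    have hmem : ∀ e ∈ G.cut W, e ∉ S' ∧ e ∉ J ∧ e ∉ D := by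
      intro e he
      have := hcon e he
      simp only [Multiset.mem_add, Finset.mem_val] at this
      tauto
    obtain ⟨f, hf, hfS⟩ := exists_of_connected G _ hS W hW1 hW2
    have hWL : ∀ e ∈ S ∩ G.cut W, e ∈ L := by
      intro e he
      rw [Finset.mem_inter] at he
      have := (hmem e he.2).1
      simp only [S', Finset.mem_sdiff] at this
      tauto
    have hfW : f ∈ S ∩ G.cut W := Finset.mem_inter.mpr ⟨hfS, hf⟩
    have hfL := hWL f hfW
    -- an edge of J crossing the fundamental cut of f
    obtain ⟨e', he'J, he'c⟩ : ∃ e' ∈ J, e' ∈ G.cut (U f) := by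
      have h1 := hnarrow (U f) (hU f hfL).1 (hU f hfL).2.1 (hU f hfL).2.2.1
      have h2 := sum_bd G J (U f)
      simp only [hJ] at h2
      rw [Finset.sum_add_distrib, h1, sum_bd] at h2
      have h3 : S' ∩ G.cut (U f) = ∅ := by
        ext e
        simp only [S', Finset.mem_inter, Finset.mem_sdiff, Finset.notMem_empty, iff_false]
        rintro ⟨⟨h4, h5⟩, h6⟩
        exact h5 (hScut f hfL e h4 h6 ▸ hfL)
      rw [h3] at h2
      have h7 : (J ∩ G.cut (U f)).Nonempty := by
        rw [Finset.nonempty_iff_ne_empty]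
        intro h
        rw [h] at h2
        simp at h2
      obtain ⟨e', he'⟩ := h7
      exact ⟨e', (Finset.mem_inter.mp he').1, (Finset.mem_inter.mp he').2⟩
    have hND : ∀ h ∈ S ∩ G.cut W, e' ∈ G.cut (U h) → h = g e' := by
      intro h hh he
      by_contra hne
      have h1 : h ∈ R e' := by
        simp only [R, N, Finset.mem_erase, Finset.mem_filter]
        exact ⟨hne, hWL h hh, he⟩
      exact (hmem h (Finset.mem_inter.mp hh).2).2.2 (Finset.mem_biUnion.mpr ⟨e', he'J, h1⟩)
    have hfg := hND f hfW he'c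
    have hconst := const_of_connected G _ hS
      (fun v => ind W v + ∑ h ∈ S ∩ G.cut W, ind (U h) v) (fun e he => by
        have h1 : ∑ h ∈ S ∩ G.cut W, (ind (U h) (G.fst e) + ind (U h) (G.snd e)) =
            if e ∈ G.cut W then 1 else 0 := by
          simp only [mem_cut_ind]
          have h2 : ∀ h ∈ S ∩ G.cut W, (if e ∈ G.cut (U h) then (1 : ZMod 2) else 0) =
              if e = h then 1 else 0 := by
            intro h hh
            have h3 : e ∈ G.cut (U h) ↔ e = h :=
              ⟨hScut h (hWL h hh) e he, fun h4 => h4 ▸ hfcut h (hWL h hh)⟩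
            simp only [h3]
          rw [Finset.sum_congr rfl h2, Finset.sum_ite_eq]
          simp only [Finset.mem_inter, he, true_and]
        rw [Finset.sum_add_distrib] at h1
        have h5 := mem_cut_ind G e W
        linear_combination h1 + h5 + z2_add_self (if e ∈ G.cut W then (1 : ZMod 2) else 0))
      (G.fst e') (G.snd e')
    have h1 : ∑ h ∈ S ∩ G.cut W, (ind (U h) (G.fst e') + ind (U h) (G.snd e')) = 1 := by
      simp only [mem_cut_ind]
      have h2 : ∀ h ∈ S ∩ G.cut W, (if e' ∈ G.cut (U h) then (1 : ZMod 2) else 0) =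
          if f = h then 1 else 0 := by
        intro h hh
        have h3 : e' ∈ G.cut (U h) ↔ f = h :=
          ⟨fun h4 => hfg.trans (hND h hh h4).symm, fun h4 => h4 ▸ he'c⟩
        simp only [h3]
      rw [Finset.sum_congr rfl h2, Finset.sum_ite_eq, if_pos hfW]
    rw [Finset.sum_add_distrib] at h1
    have h5 : e' ∈ G.cut W := by
      rw [mem_cut_iff_ind]
      linear_combination hconst + h1 - z2_add_self (∑ h ∈ S ∩ G.cut W, ind (U h) (G.fst e'))
        + z2_add_self (ind W (G.snd e'))
    exact (hmem e' h5).2.1 he'J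
  · rw [oddVerts_eq]
    intro v
    rw [deg_add, deg_add, deg_add]
    push_cast
    rw [deg_cast, deg_cast, deg_cast, hJ]
    linear_combination z2_add_self (G.bd S' v) + z2_add_self (G.bd D v)
  · have : ((S'.val + J.val + (D.val + D.val)).map c).sum =
        wt c S' + wt c J + (wt c D + wt c D) := by
      simp [wt, Finset.sum_map_val]
    rw [this, hLexp2]
    rw [hwy, hLexp, hcI] at hJw
    have hLw : ∑ f ∈ L, c f = wt c L := rfl
    rw [hLw] at hwx
    linarith

end MultiGraph

namespace MultiGraph

variable {V E : Type*} [Fintype V] [DecidableEq V] [Fintype E] [DecidableEq E]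

/-- There is a `T`-tour of cost at most
`(8/5)c(x*) + (1/5)c(I_p) − (2/5)c(L_p) − (2/5)Σ_{C ∈ 𝒩} (2 − x*(C))²·c(v^C)`. -/
theorem edge_deletion_bound (G : MultiGraph V E) (hG : G.Connected)
    (T : Finset V) (hT : Even T.card) (c : E → ℝ) (hc : ∀ e, 0 ≤ c e)
    (x : E → ℝ) (hx : G.LPFeasible T x)
    (p : Finset E → ℝ) (hp0 : ∀ S, 0 ≤ p S)
    (hptree : ∀ S, p S ≠ 0 → G.IsSpanningTree S)
    (hpsum : ∑ S : Finset E, p S = 1)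
    (hdom : ∀ e, ∑ S : Finset E, p S * chi S e ≤ x e)
    (I : Finset E → Finset E)
    (hI : ∀ S, p S ≠ 0 → I S ⊆ S ∧ G.oddVerts (I S).val = T) :
    ∃ F : Multiset E, G.IsTTour T F ∧
      (F.map c).sum ≤
        (8 / 5 : ℝ) * (∑ e, c e * x e) +
        (1 / 5 : ℝ) * (∑ e, c e * ∑ S : Finset E, p S * chi (I S) e) -
        (2 / 5 : ℝ) * (∑ e, c e * ∑ S : Finset E, p S * chi (G.lonelyEdges x S) e) -
        (2 / 5 : ℝ) * ∑ C ∈ G.narrowCuts x,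
          (2 - ∑ f ∈ C, x f) ^ 2 * (∑ e, c e * G.vC x p C e) := by
  have hxnn := hx.1
  -- total mass on cuts
  have hcard : ∀ C S : Finset E, ∑ e ∈ C, chi S e = ((S ∩ C).card : ℝ) := by
    intro C S
    simp only [chi]
    rw [Finset.sum_ite_mem, Finset.inter_comm]; simp
  have hwchi : ∀ S : Finset E, ∑ e, c e * chi S e = wt c S := by
    intro S
    simp only [chi, mul_ite, mul_one, mul_zero, wt]
    rw [Finset.sum_ite_mem, Finset.univ_inter]
  have hx1 : ∀ U : Finset V, U.Nonempty → U ≠ univ → 1 ≤ ∑ e ∈ G.cut U, x e := by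
    intro U h1 h2
    calc (1 : ℝ) = ∑ S : Finset E, p S := hpsum.symm
      _ ≤ ∑ S : Finset E, p S * ((S ∩ G.cut U).card : ℝ) := by
        refine Finset.sum_le_sum fun S _ => ?_
        by_cases hp : p S = 0
        · simp [hp]
        · obtain ⟨e, he, heS⟩ := exists_of_connected G _ (hptree S hp).1 U h1 h2
          have : 0 < (S ∩ G.cut U).card :=
            Finset.card_pos.mpr ⟨e, Finset.mem_inter.mpr ⟨heS, he⟩⟩
          have h3 : (1 : ℝ) ≤ (S ∩ G.cut U).card := by exact_mod_cast this
          exact le_mul_of_one_le_right (hp0 S) h3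
      _ = ∑ e ∈ G.cut U, ∑ S : Finset E, p S * chi S e := by
        rw [Finset.sum_comm]
        refine Finset.sum_congr rfl fun S _ => ?_
        rw [← Finset.mul_sum, hcard]
      _ ≤ ∑ e ∈ G.cut U, x e := Finset.sum_le_sum fun e _ => hdom e
  obtain ⟨S0, hS0⟩ : ∃ S, p S ≠ 0 := by
    by_contra h
    push Not at h
    simp [h] at hpsum
  haveI : Nonempty V := by
    have := (hptree S0 hS0).2
    exact Fintype.card_pos_iff.mp (by omega)
  -- rewrite the right-hand side as an average
  have hswap : ∀ A : Finset E → Finset E,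
      ∑ e, c e * ∑ S : Finset E, p S * chi (A S) e = ∑ S : Finset E, p S * wt c (A S) := by
    intro A
    simp only [Finset.mul_sum]
    rw [Finset.sum_comm]
    refine Finset.sum_congr rfl fun S _ => ?_
    rw [← hwchi, Finset.mul_sum]
    exact Finset.sum_congr rfl fun e _ => by ring
  have hcx : ∑ S : Finset E, p S * wt c S ≤ ∑ e, c e * x e := by
    rw [← hswap (fun S => S)]
    exact Finset.sum_le_sum fun e _ => mul_le_mul_of_nonneg_left (hdom e) (hc e)
  have hvC : ∀ C ∈ G.narrowCuts x, (2 - ∑ f ∈ C, x f) ^ 2 * (∑ e, c e * G.vC x p C e) =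
      ∑ S : Finset E, p S *
        (if G.Lonely x S C then (2 - ∑ f ∈ C, x f) * wt c (S ∩ C) else 0) := by
    intro C hC
    rw [narrowCuts, Finset.mem_filter] at hC
    have hne : (2 - ∑ f ∈ C, x f) ≠ 0 := by
      have := hC.2.2
      linarith
    have h1 : ∑ e, c e * G.vC x p C e = (1 / (2 - ∑ f ∈ C, x f)) *
        ∑ S : Finset E, (if G.Lonely x S C then p S else 0) * wt c (S ∩ C) := by
      simp only [vC, Finset.mul_sum]
      rw [Finset.sum_comm]
      refine Finset.sum_congr rfl fun S _ => ?_
      rw [← hwchi, Finset.mul_sum, Finset.mul_sum]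
      exact Finset.sum_congr rfl fun e _ => by ring
    rw [h1, ← mul_assoc]
    have h2 : (2 - ∑ f ∈ C, x f) ^ 2 * (1 / (2 - ∑ f ∈ C, x f)) = 2 - ∑ f ∈ C, x f := by
      field_simp
    rw [h2, Finset.mul_sum]
    refine Finset.sum_congr rfl fun S _ => ?_
    split_ifs <;> ring
  have hlon : ∀ S : Finset E, ∑ C ∈ G.narrowCuts x,
      (if G.Lonely x S C then (2 - ∑ f ∈ C, x f) * wt c (S ∩ C) else 0) =
      ∑ C ∈ G.lonelyCuts x S, (2 - ∑ f ∈ C, x f) * wt c (S ∩ C) := by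
    intro S
    rw [← Finset.sum_filter]
    refine Finset.sum_congr ?_ fun _ _ => rfl
    ext C
    simp only [narrowCuts, lonelyCuts, Finset.mem_filter, Finset.mem_univ, true_and]
    exact ⟨fun h => h.2, fun h => ⟨h.1, h⟩⟩
  have hlast : ∑ C ∈ G.narrowCuts x, (2 - ∑ f ∈ C, x f) ^ 2 * (∑ e, c e * G.vC x p C e) =
      ∑ S : Finset E, p S *
        ∑ C ∈ G.lonelyCuts x S, (2 - ∑ f ∈ C, x f) * wt c (S ∩ C) := by
    rw [Finset.sum_congr rfl hvC, Finset.sum_comm]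
    refine Finset.sum_congr rfl fun S _ => ?_
    rw [← Finset.mul_sum, hlon]
  rw [hlast, hswap I, hswap (fun S => G.lonelyEdges x S)]
  by_contra hcon
  push Not at hcon
  set B := (8 / 5 : ℝ) * (∑ e, c e * x e) +
        (1 / 5 : ℝ) * (∑ S : Finset E, p S * wt c (I S)) -
        (2 / 5 : ℝ) * (∑ S : Finset E, p S * wt c (G.lonelyEdges x S)) -
        (2 / 5 : ℝ) * ∑ S : Finset E, p S *
          ∑ C ∈ G.lonelyCuts x S, (2 - ∑ f ∈ C, x f) * wt c (S ∩ C) with hB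
  have hlt : ∀ S, p S ≠ 0 → B < 6 / 5 * wt c S + 1 / 5 * wt c (I S)
      + 2 / 5 * (∑ e, c e * x e) - 2 / 5 * wt c (G.lonelyEdges x S)
      - 2 / 5 * ∑ C ∈ G.lonelyCuts x S, (2 - ∑ f ∈ C, x f) * wt c (S ∩ C) := by
    intro S hp
    obtain ⟨F, hF, hFc⟩ := per_tree G T c hc x hx hx1 S (hptree S hp).1 (I S) (hI S hp).1
      (hI S hp).2
    exact lt_of_lt_of_le (hcon F hF) hFc
  have hsum : ∑ S : Finset E, p S * B < ∑ S : Finset E, p S * (6 / 5 * wt c S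
      + 1 / 5 * wt c (I S)
      + 2 / 5 * (∑ e, c e * x e) - 2 / 5 * wt c (G.lonelyEdges x S)
      - 2 / 5 * ∑ C ∈ G.lonelyCuts x S, (2 - ∑ f ∈ C, x f) * wt c (S ∩ C)) := by
    refine Finset.sum_lt_sum (fun S _ => ?_) ⟨S0, Finset.mem_univ _, ?_⟩
    · by_cases hp : p S = 0
      · simp [hp]
      · exact mul_le_mul_of_nonneg_left (hlt S hp).le (hp0 S)
    · exact mul_lt_mul_of_pos_left (hlt S0 hS0) (lt_of_le_of_ne (hp0 S0) (Ne.symm hS0))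
  rw [← Finset.sum_mul, hpsum, one_mul] at hsum
  have hexp : ∑ S : Finset E, p S * (6 / 5 * wt c S + 1 / 5 * wt c (I S)
      + 2 / 5 * (∑ e, c e * x e) - 2 / 5 * wt c (G.lonelyEdges x S)
      - 2 / 5 * ∑ C ∈ G.lonelyCuts x S, (2 - ∑ f ∈ C, x f) * wt c (S ∩ C)) =
      6 / 5 * (∑ S : Finset E, p S * wt c S) + 1 / 5 * (∑ S : Finset E, p S * wt c (I S))
      + 2 / 5 * (∑ e, c e * x e) * (∑ S : Finset E, p S)
      - 2 / 5 * (∑ S : Finset E, p S * wt c (G.lonelyEdges x S))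
      - 2 / 5 * ∑ S : Finset E, p S *
          ∑ C ∈ G.lonelyCuts x S, (2 - ∑ f ∈ C, x f) * wt c (S ∩ C) := by
    rw [Finset.mul_sum univ (fun S => p S * wt c S), Finset.mul_sum univ (fun S => p S * wt c (I S)),
      Finset.mul_sum univ p, Finset.mul_sum univ (fun S => p S * wt c (G.lonelyEdges x S)),
      Finset.mul_sum univ (fun S => p S *
          ∑ C ∈ G.lonelyCuts x S, (2 - ∑ f ∈ C, x f) * wt c (S ∩ C)),
      ← Finset.sum_add_distrib, ← Finset.sum_add_distrib, ← Finset.sum_sub_distrib,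
      ← Finset.sum_sub_distrib]
    exact Finset.sum_congr rfl fun S _ => by ring
  rw [hexp, hpsum] at hsum
  linarith

end MultiGraph
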